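/- arXiv:1602.03542 — 10 statements merged into one kernel-verified Lean document; each statement's English description precedes it below -/
import Mathlib

section
/- Let F, G : M → ℝ be smooth functions whose Poisson bracket {F, G} is a constant function. Let φ^F, φ^G : ℝ → M → M be global flows of X_F and X_G respectively, i.e. φ^F 0 = id and for each y ∈ M the curve s ↦ φ^F s y is an integral curve of X_F through y, and similarly for G. Then the flows commute: φ^F s (φ^G t y) = φ^G t (φ^F s y) for all s, t ∈ ℝ and y ∈ M. -/
/-!
STATEMENT 8: On M := (Fin n → ℝ) × (Fin n → ℝ) with the standard symplectic form ω₀,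
let F, G be smooth functions whose Poisson bracket {F, G} is a constant function,
and let φF, φG be global flows of the Hamiltonian vector fields X_F, X_G.
Then the flows commute: φF s (φG t y) = φG t (φF s y) for all s, t, y.
-/

noncomputable section

/-- The phase space `(Fin n → ℝ) × (Fin n → ℝ)`. -/
abbrev M (n : ℕ) : Type := (Fin n → ℝ) × (Fin n → ℝ)

/-- The standard symplectic form on `M n`. -/
def ω₀ {n : ℕ} (x y : M n) : ℝ :=
  (∑ i, x.1 i * y.2 i) - ∑ i, x.2 i * y.1 i

open Set Filter Topology Metric

section Flows

variable {E : Type*} [NormedAddCommGroup E] [NormedSpace ℝ E]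

theorem gronwallBound_self (c K x : ℝ) :
    gronwallBound c K c x = c * gronwallBound 1 K 1 x := by
  unfold gronwallBound
  split_ifs <;> ring

/-- A Grönwall estimate for a vector field that is only Lipschitz on a ball: the exact solution `f`
is not assumed to stay in the ball, this follows from the smallness of the bound. -/
theorem dist_le_gronwallBound_of_lipschitzOnWith_closedBall {X : E → E} {K : NNReal} {R S δ ε : ℝ}
    (hX : LipschitzOnWith K X (closedBall 0 (R + 1))) {f g g' : ℝ → E} (hδ : 0 ≤ δ) (hε : 0 ≤ ε)
    (hf : ∀ s, HasDerivAt f (X (f s)) s) (hg : ∀ s, HasDerivAt g (g' s) s)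
    (hg' : ∀ s ∈ Icc 0 S, dist (g' s) (X (g s)) ≤ ε) (hgR : ∀ s ∈ Icc 0 S, ‖g s‖ ≤ R)
    (h0 : dist (f 0) (g 0) ≤ δ) (hlt : gronwallBound δ K ε S < 1) :
    ∀ s ∈ Icc 0 S, dist (f s) (g s) ≤ gronwallBound δ K ε s := by
  have hfc : Continuous f := continuous_iff_continuousAt.2 fun s => (hf s).continuousAt
  have hgc : Continuous g := continuous_iff_continuousAt.2 fun s => (hg s).continuousAt
  have key : ∀ s ∈ Icc 0 S, (∀ u ∈ Ico 0 s, dist (f u) (g u) ≤ 1) →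
      dist (f s) (g s) ≤ gronwallBound δ K ε s := by
    intro s hs hu
    have hsub : ∀ u ∈ Ico 0 s, u ∈ Icc 0 S := fun u hu => ⟨hu.1, hu.2.le.trans hs.2⟩
    have := dist_le_of_approx_trajectories_ODE_of_mem (v := fun _ => X)
      (s := fun _ => closedBall 0 (R + 1)) (f' := fun s => X (f s)) (g' := g') (εf := 0) (εg := ε)
      (fun _ _ => hX) hfc.continuousOn (fun u _ => (hf u).hasDerivWithinAt) (by simp)
      (fun u h => ?_) hgc.continuousOn (fun u _ => (hg u).hasDerivWithinAt)
      (fun u h => hg' u (hsub u h)) (fun u h => ?_) h0 s ⟨hs.1, le_rfl⟩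
    · simpa using this
    · rw [mem_closedBall_zero_iff]
      have h1 := hgR u (hsub u h)
      have h2 := hu u h
      rw [dist_eq_norm] at h2
      linarith [norm_sub_norm_le (f u) (g u)]
    · rw [mem_closedBall_zero_iff]
      linarith [hgR u (hsub u h)]
  have stay : ∀ s ∈ Icc 0 S, dist (f s) (g s) ≤ 1 := by
    by_contra! hcon
    obtain ⟨s₁, hs₁, hs₁'⟩ := hcon
    let A : Set ℝ := Icc 0 S ∩ {s | 1 ≤ dist (f s) (g s)}
    have hA : IsCompact A :=
      isCompact_Icc.inter_right (isClosed_le continuous_const (hfc.dist hgc))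
    obtain ⟨m, hm, hmin⟩ := hA.exists_isLeast ⟨s₁, hs₁, hs₁'.le⟩
    have hle := key m hm.1 fun u hu => by
      by_contra! hc
      exact absurd (hmin ⟨⟨hu.1, hu.2.le.trans hm.1.2⟩, hc.le⟩) (not_le.2 hu.2)
    have h1 : 1 ≤ dist (f m) (g m) := hm.2
    linarith [gronwallBound_mono hδ hε K.coe_nonneg hm.1.2]
  exact fun s hs => key s hs fun u hu => stay u ⟨hu.1, hu.2.le.trans hs.2⟩

theorem ContDiff.exists_norm_sub_sub_fderiv_le_of_isCompact {X : E → E} (hX : ContDiff ℝ 1 X)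
    {k : Set E} (hk : IsCompact k) {ε : ℝ} (hε : 0 < ε) :
    ∃ ρ > 0, ∀ x ∈ k, ∀ z, ‖z - x‖ < ρ → ‖X z - X x - fderiv ℝ X x (z - x)‖ ≤ ε * ‖z - x‖ := by
  have hu := hk.uniformContinuousAt_of_continuousAt (fderiv ℝ X)
    (fun a _ => (hX.continuous_fderiv one_ne_zero).continuousAt) (dist_mem_uniformity hε)
  obtain ⟨ρ, hρ, h⟩ := mem_uniformity_dist.1 hu
  refine ⟨ρ, hρ, fun x hx z hz => ?_⟩
  refine (convex_ball x ρ).norm_image_sub_le_of_norm_fderiv_le'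
    (fun y _ => (hX.differentiable one_ne_zero) y) (fun y hy => ?_) (mem_ball_self hρ)
    (mem_ball_iff_norm.2 hz)
  have : Dist.dist (fderiv ℝ X x) (fderiv ℝ X y) < ε := h (mem_ball'.1 hy) hx
  rw [← dist_eq_norm, dist_comm]
  exact this.le

theorem ContDiff.exists_lipschitzOnWith_closedBall [ProperSpace E] {X : E → E}
    (hX : ContDiff ℝ 1 X) (R : ℝ) : ∃ K, LipschitzOnWith K X (closedBall 0 R) :=
  (hX.locallyLipschitz.locallyLipschitzOn).exists_lipschitzOnWith_of_compact
    (isCompact_closedBall 0 R)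

theorem eq_of_hasDerivAt_of_contDiff [ProperSpace E] {X : E → E} (hX : ContDiff ℝ 1 X)
    {f g : ℝ → E} (hf : ∀ s, HasDerivAt f (X (f s)) s) (hg : ∀ s, HasDerivAt g (X (g s)) s)
    (h0 : f 0 = g 0) : f = g := by
  funext t
  have hfc : Continuous f := continuous_iff_continuousAt.2 fun s => (hf s).continuousAt
  have hgc : Continuous g := continuous_iff_continuousAt.2 fun s => (hg s).continuousAt
  let I : Set ℝ := Icc (-(|t| + 1)) (|t| + 1)
  obtain ⟨Bf, hBf⟩ := (isCompact_Icc : IsCompact I).exists_bound_of_continuousOn hfc.continuousOn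
  obtain ⟨Bg, hBg⟩ := (isCompact_Icc : IsCompact I).exists_bound_of_continuousOn hgc.continuousOn
  obtain ⟨K, hK⟩ := hX.exists_lipschitzOnWith_closedBall (max Bf Bg)
  refine ODE_solution_unique_of_mem_Ioo (v := fun _ => X)
    (s := fun _ => closedBall 0 (max Bf Bg)) (a := -(|t| + 1)) (b := |t| + 1) (t₀ := 0)
    (fun _ _ => hK) ?_ (fun s hs => ⟨hf s, ?_⟩) (fun s hs => ⟨hg s, ?_⟩) h0 ?_
  · constructor <;> linarith [abs_nonneg t]
  · exact mem_closedBall_zero_iff.2 ((hBf s ⟨hs.1.le, hs.2.le⟩).trans (le_max_left _ _))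
  · exact mem_closedBall_zero_iff.2 ((hBg s ⟨hs.1.le, hs.2.le⟩).trans (le_max_right _ _))
  · constructor <;> linarith [neg_abs_le t, le_abs_self t]

/-- If `X` and `Y` commute, the forward flow of `X` maps integral curves of `Y` to integral curves
of `Y`. Differentiability of the flow in the initial condition is not needed: the curve
`x + h • Y x` solves the equation of `X` up to `o(h)` along an integral curve `x` of `X`. -/
theorem hasDerivAt_flow_comp_of_nonneg [ProperSpace E] {X Y : E → E} (hX : ContDiff ℝ 1 X)
    (hY : ContDiff ℝ 1 Y) (hXY : ∀ x, fderiv ℝ X x (Y x) = fderiv ℝ Y x (X x))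
    {φ : ℝ → E → E} (hφ0 : ∀ y, φ 0 y = y)
    (hφ : ∀ y s, HasDerivAt (fun t => φ t y) (X (φ s y)) s)
    {γ : ℝ → E} {t : ℝ} (hγ : HasDerivAt γ (Y (γ t)) t) {S : ℝ} (hS : 0 ≤ S) :
    HasDerivAt (fun u => φ S (γ u)) (Y (φ S (γ t))) t := by
  set x : ℝ → E := fun s => φ s (γ t) with hx
  have hxd : ∀ s, HasDerivAt x (X (x s)) s := hφ (γ t)
  have hxc : Continuous x := continuous_iff_continuousAt.2 fun s => (hxd s).continuousAt
  have hI : IsCompact (Icc 0 S) := isCompact_Icc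
  obtain ⟨R, hR⟩ := hI.exists_bound_of_continuousOn hxc.continuousOn
  obtain ⟨B, hB⟩ := hI.exists_bound_of_continuousOn (hY.continuous.comp hxc).continuousOn
  have hB0 : 0 ≤ B := (norm_nonneg _).trans (hB 0 ⟨le_rfl, hS⟩)
  obtain ⟨K, hK⟩ := hX.exists_lipschitzOnWith_closedBall (R + 1 + 1)
  set C := gronwallBound 1 K 1 S with hC
  have hC1 : 1 ≤ C := by
    simpa [gronwallBound_x0] using
      gronwallBound_mono zero_le_one zero_le_one K.coe_nonneg hS
  have hC0 : 0 < C := one_pos.trans_le hC1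
  rw [hasDerivAt_iff_isLittleO_nhds_zero, Asymptotics.isLittleO_iff]
  intro c hc
  have hη : 0 < c / C := div_pos hc hC0
  obtain ⟨ρ, hρ, hrem⟩ := hX.exists_norm_sub_sub_fderiv_le_of_isCompact (hI.image hxc)
    (div_pos hη (by linarith : 0 < B + 1))
  rw [hasDerivAt_iff_isLittleO_nhds_zero, Asymptotics.isLittleO_iff] at hγ
  have small : ∀ a : ℝ, ∀ r > 0, ∀ᶠ h : ℝ in 𝓝 0, ‖h‖ * a < r := fun a r hr => by
    have : Tendsto (fun h : ℝ => ‖h‖ * a) (𝓝 0) (𝓝 0) :=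
      Continuous.tendsto' (by fun_prop) _ _ (by simp)
    exact this.eventually_lt_const hr
  filter_upwards [hγ hη, small (B + 1) ρ hρ, small (B + 1) 1 one_pos, small c 1 one_pos]
    with h h₀ hhρ hh1 hhc
  have hnB : ∀ s ∈ Icc 0 S, ‖h • Y (x s)‖ ≤ ‖h‖ * (B + 1) := fun s hs => by
    rw [norm_smul]
    have : ‖Y (x s)‖ ≤ B := hB s hs
    gcongr
    linarith
  have hgr : gronwallBound (c / C * ‖h‖) K (c / C * ‖h‖) S = c * ‖h‖ := by
    rw [gronwallBound_self, ← hC]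
    field_simp
  have hδ : 0 ≤ c / C * ‖h‖ := by positivity
  have := dist_le_gronwallBound_of_lipschitzOnWith_closedBall (R := R + 1) (S := S) hK
    (f := fun s => φ s (γ (t + h))) (g := fun s => x s + h • Y (x s))
    (g' := fun s => X (x s) + h • fderiv ℝ Y (x s) (X (x s))) hδ hδ (hφ _)
    (fun s => (hxd s).add
      (((hY.differentiable one_ne_zero (x s)).hasFDerivAt.comp_hasDerivAt s (hxd s)).const_smul h))
    (fun s hs => ?_) (fun s hs => ?_) ?_ (by rw [hgr]; linarith) S ⟨hS, le_rfl⟩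
  · rw [hgr, dist_eq_norm] at this
    simpa [hx, sub_sub] using this
  · have := hrem (x s) (mem_image_of_mem x hs) (x s + h • Y (x s))
      (by simpa using (hnB s hs).trans_lt hhρ)
    rw [add_sub_cancel_left, map_smul, hXY] at this
    rw [dist_comm, dist_eq_norm, ← sub_sub]
    refine this.trans ((mul_le_mul_of_nonneg_left (hnB s hs) (by positivity)).trans_eq ?_)
    field_simp
  · linarith [norm_add_le (x s) (h • Y (x s)), hR s hs, hnB s hs]
  · simpa [hx, hφ0, dist_eq_norm, sub_sub] using h₀

theorem flows_commute_of_fderiv_comm [ProperSpace E] {X Y : E → E} (hX : ContDiff ℝ 1 X)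
    (hY : ContDiff ℝ 1 Y) (hXY : ∀ x, fderiv ℝ X x (Y x) = fderiv ℝ Y x (X x))
    {φ ψ : ℝ → E → E} (hφ0 : ∀ y, φ 0 y = y)
    (hφ : ∀ y s, HasDerivAt (fun t => φ t y) (X (φ s y)) s) (hψ0 : ∀ y, ψ 0 y = y)
    (hψ : ∀ y s, HasDerivAt (fun t => ψ t y) (Y (ψ s y)) s) (s t : ℝ) (y : E) :
    φ s (ψ t y) = ψ t (φ s y) := by
  have key : ∀ t, HasDerivAt (fun u => φ s (ψ u y)) (Y (φ s (ψ t y))) t := by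
    intro t
    rcases le_total 0 s with hs | hs
    · exact hasDerivAt_flow_comp_of_nonneg hX hY hXY hφ0 hφ (hψ y t) hs
    · have := hasDerivAt_flow_comp_of_nonneg (X := fun x => -X x) (φ := fun s => φ (-s))
        hX.neg hY (fun x => by simp [fderiv_fun_neg, hXY]) (by simpa using hφ0)
        (fun y s => by
          simpa [Function.comp_def] using (hφ y (-s)).scomp s (hasDerivAt_neg s))
        (hψ y t) (neg_nonneg.2 hs)
      simpa using this
  exact congrFun (eq_of_hasDerivAt_of_contDiff hY key (hψ (φ s y)) (by simp [hψ0])) t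

end Flows

section Hamiltonian

variable {n : ℕ}

/-- The standard symplectic form as a continuous bilinear map. -/
def symplecticCLM (n : ℕ) : M n →L[ℝ] M n →L[ℝ] ℝ :=
  (LinearMap.mk₂ ℝ (ω₀ (n := n))
    (fun x y z => by simp only [ω₀, Prod.fst_add, Prod.snd_add, Pi.add_apply, add_mul,
      Finset.sum_add_distrib]; ring)
    (fun c x y => by simp [ω₀, Finset.mul_sum, mul_sub, mul_assoc])
    (fun x y z => by simp only [ω₀, Prod.fst_add, Prod.snd_add, Pi.add_apply, mul_add,
      Finset.sum_add_distrib]; ring)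
    (fun c x y => by simp [ω₀, Finset.mul_sum, mul_sub, mul_left_comm])).toContinuousBilinearMap

theorem symplecticCLM_apply (x y : M n) : symplecticCLM n x y = ω₀ x y := rfl

theorem symplecticCLM_antisymm (x y : M n) : symplecticCLM n x y = -symplecticCLM n y x := by
  simp only [symplecticCLM_apply, ω₀, neg_sub, mul_comm]

theorem symplecticCLM_apply_zero_single (x : M n) (i : Fin n) :
    symplecticCLM n x (0, Pi.single i 1) = x.1 i := by
  simp [symplecticCLM_apply, ω₀, Pi.single_apply]

theorem symplecticCLM_apply_single_zero (x : M n) (i : Fin n) :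
    symplecticCLM n x (Pi.single i 1, 0) = -x.2 i := by
  simp [symplecticCLM_apply, ω₀, Pi.single_apply]

theorem symplecticCLM_injective : Function.Injective (symplecticCLM n) := by
  intro x y h
  refine Prod.ext (funext fun i => ?_) (funext fun i => ?_)
  · rw [← symplecticCLM_apply_zero_single, h, symplecticCLM_apply_zero_single]
  · rw [← neg_inj, ← symplecticCLM_apply_single_zero, h, symplecticCLM_apply_single_zero]

theorem contDiff_of_contDiff_symplecticCLM {m : WithTop ℕ∞} {X : M n → M n}
    (h : ContDiff ℝ m fun x => symplecticCLM n (X x)) : ContDiff ℝ m X := by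
  have h1 : ContDiff ℝ m fun x => (X x).1 := contDiff_pi.2 fun i => by
    simp_rw [← symplecticCLM_apply_zero_single]
    exact h.clm_apply contDiff_const
  have h2 : ContDiff ℝ m fun x => (X x).2 := contDiff_pi.2 fun i => by
    have := (h.clm_apply (contDiff_const (c := ((Pi.single i 1, 0) : M n)))).neg
    simpa only [symplecticCLM_apply_single_zero, neg_neg] using this
  exact h1.prodMk h2

/-- Hamiltonian vector fields of functions with constant Poisson bracket commute. -/
theorem fderiv_hamiltonian_comm {F G : M n → ℝ} (hF : ContDiff ℝ 2 F) (hG : ContDiff ℝ 2 G)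
    {X Y : M n → M n} (hX : Differentiable ℝ X) (hY : Differentiable ℝ Y)
    (hXF : ∀ x, fderiv ℝ F x = symplecticCLM n (X x))
    (hYG : ∀ x, fderiv ℝ G x = symplecticCLM n (Y x))
    {k : ℝ} (hk : ∀ x, fderiv ℝ F x (Y x) = k) (x : M n) :
    fderiv ℝ X x (Y x) = fderiv ℝ Y x (X x) := by
  have second : ∀ {H : M n → ℝ} {Z : M n → M n}, ContDiff ℝ 2 H → Differentiable ℝ Z →
      (∀ x, fderiv ℝ H x = symplecticCLM n (Z x)) → ∀ v w,
      symplecticCLM n (fderiv ℝ Z x v) w = symplecticCLM n (fderiv ℝ Z x w) v := by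
    intro H Z hH hZ hHZ v w
    have hd : fderiv ℝ (fderiv ℝ H) x = (symplecticCLM n).comp (fderiv ℝ Z x) := by
      rw [funext hHZ]
      exact ((symplecticCLM n).hasFDerivAt.comp x (hZ x).hasFDerivAt).fderiv
    have := (hH.contDiffAt (x := x)).isSymmSndFDerivAt (by simp) v w
    rwa [hd] at this
  have hbr : ∀ v, symplecticCLM n (X x) (fderiv ℝ Y x v) +
      symplecticCLM n (fderiv ℝ X x v) (Y x) = 0 := by
    intro v
    have h1 := ((symplecticCLM n).hasFDerivAt.comp x (hX x).hasFDerivAt).clm_apply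
      (hY x).hasFDerivAt
    have h2 : HasFDerivAt (fun z => symplecticCLM n (X z) (Y z)) (0 : M n →L[ℝ] ℝ) x := by
      simp_rw [← hXF, hk]
      exact hasFDerivAt_const k x
    simpa using DFunLike.congr_fun (h1.unique h2) v
  refine symplecticCLM_injective (ContinuousLinearMap.ext fun v => ?_)
  rw [second hF hX hXF, second hG hY hYG, symplecticCLM_antisymm (fderiv ℝ Y x v)]
  linarith [hbr v]

end Hamiltonian

theorem hamiltonian_flows_commute_of_constant_bracket
    {n : ℕ} (hn : 1 ≤ n)
    (F G : M n → ℝ) (hF : ContDiff ℝ (⊤ : ℕ∞) F) (hG : ContDiff ℝ (⊤ : ℕ∞) G)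
    -- XF, XG are the Hamiltonian vector fields of F and G
    (XF XG : M n → M n)
    (hXF : ∀ x w : M n, ω₀ (XF x) w = fderiv ℝ F x w)
    (hXG : ∀ x w : M n, ω₀ (XG x) w = fderiv ℝ G x w)
    -- the Poisson bracket {F, G} is a constant function
    (k : ℝ) (hk : ∀ x : M n, fderiv ℝ F x (XG x) = k)
    -- φF and φG are global flows of XF and XG
    (φF φG : ℝ → M n → M n)
    (hφF0 : ∀ y : M n, φF 0 y = y)
    (hφF : ∀ (y : M n) (s : ℝ), HasDerivAt (fun t => φF t y) (XF (φF s y)) s)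
    (hφG0 : ∀ y : M n, φG 0 y = y)
    (hφG : ∀ (y : M n) (s : ℝ), HasDerivAt (fun t => φG t y) (XG (φG s y)) s) :
    ∀ (s t : ℝ) (y : M n), φF s (φG t y) = φG t (φF s y) := by
  have hXF' : ∀ x, fderiv ℝ F x = symplecticCLM n (XF x) :=
    fun x => ContinuousLinearMap.ext fun w => (hXF x w).symm
  have hXG' : ∀ x, fderiv ℝ G x = symplecticCLM n (XG x) :=
    fun x => ContinuousLinearMap.ext fun w => (hXG x w).symm
  have hF2 : ContDiff ℝ 2 F := contDiff_infty.1 hF 2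
  have hG2 : ContDiff ℝ 2 G := contDiff_infty.1 hG 2
  have hX : ContDiff ℝ 1 XF := contDiff_of_contDiff_symplecticCLM <| by
    simpa only [← hXF'] using hF2.fderiv_right (m := 1) (by norm_num)
  have hY : ContDiff ℝ 1 XG := contDiff_of_contDiff_symplecticCLM <| by
    simpa only [← hXG'] using hG2.fderiv_right (m := 1) (by norm_num)
  exact flows_commute_of_fderiv_comm hX hY
    (fderiv_hamiltonian_comm hF2 hG2 (hX.differentiable one_ne_zero)
      (hY.differentiable one_ne_zero) hXF' hXG' hk) hφF0 hφF hφG0 hφG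
end
end

section
/- In the setting of a weakly Hamiltonian action with Casimir-valued cocycle, the flow evaluation ζ(s) := ρ u (φ s) is infinitely differentiable, its derivative satisfies ζ'(s) = ρ ⁅u,v⁆ (φ s) + c u v for all s ∈ ℝ, and its iterated derivatives at 0 are given by iteratedDeriv 0 ζ 0 = ρ u x and, for every j ≥ 1, iteratedDeriv j ζ 0 = ρ (b j) x + c (b (j−1)) v. -/
/-!
STATEMENT 9: Weakly Hamiltonian action setting.  The flow evaluation
ζ(s) := ρ u (φ s) is infinitely differentiable, satisfies
ζ'(s) = ρ ⁅u,v⁆ (φ s) + c u v, and its iterated derivatives at 0 are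
iteratedDeriv 0 ζ 0 = ρ u x and, for j ≥ 1,
iteratedDeriv j ζ 0 = ρ (b j) x + c (b (j−1)) v.
-/

noncomputable section

/-- A sequence of functions, each of which is up to an additive constant the derivative of its
predecessor, computes the iterated derivatives of its initial term. -/
theorem iteratedDeriv_succ_of_hasDerivAt_add_const {f : ℕ → ℝ → ℝ} {a : ℕ → ℝ}
    (hf : ∀ j s, HasDerivAt (f j) (f (j + 1) s + a j) s) (j : ℕ) :
    iteratedDeriv (j + 1) (f 0) = fun s => f (j + 1) s + a j := by
  induction j with
  | zero =>
    rw [iteratedDeriv_one]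
    exact funext fun s => (hf 0 s).deriv
  | succ j ih =>
    rw [iteratedDeriv_succ, ih]
    exact funext fun s => ((hf (j + 1) s).add_const (a j)).deriv

theorem contDiff_of_hasDerivAt_add_const {f : ℕ → ℝ → ℝ} {a : ℕ → ℝ}
    (hf : ∀ j s, HasDerivAt (f j) (f (j + 1) s + a j) s) :
    ContDiff ℝ (⊤ : ℕ∞) (f 0) := by
  refine contDiff_of_differentiable_iteratedDeriv fun m _ => ?_
  cases m with
  | zero =>
    rw [iteratedDeriv_zero]
    exact fun s => (hf 0 s).differentiableAt
  | succ j =>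
    rw [iteratedDeriv_succ_of_hasDerivAt_add_const hf j]
    exact fun s => ((hf (j + 1) s).add_const (a j)).differentiableAt

theorem flow_evaluation_derivatives
    {n : ℕ} (hn : 1 ≤ n)
    {𝔤 : Type*} [LieRing 𝔤] [LieAlgebra ℝ 𝔤] [FiniteDimensional ℝ 𝔤]
    (ρ : 𝔤 →ₗ[ℝ] (M n → ℝ))
    (hρ : ∀ u : 𝔤, ContDiff ℝ (⊤ : ℕ∞) (ρ u))
    -- X u is the Hamiltonian vector field of ρ u
    (X : 𝔤 → M n → M n)
    (hX : ∀ (u : 𝔤) (x w : M n), ω₀ (X u x) w = fderiv ℝ (ρ u) x w)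
    -- c is a bilinear map with {ρ u, ρ v}(x) = ρ ⁅u,v⁆ x + c u v
    (c : 𝔤 →ₗ[ℝ] 𝔤 →ₗ[ℝ] ℝ)
    (hc : ∀ (u v : 𝔤) (x : M n), fderiv ℝ (ρ u) x (X v x) = ρ ⁅u, v⁆ x + c u v)
    -- fixed u, v and the iterated brackets b
    (u v : 𝔤) (b : ℕ → 𝔤) (hb0 : b 0 = u) (hbs : ∀ j : ℕ, b (j + 1) = ⁅b j, v⁆)
    -- φ is an integral curve of X v through x
    (x : M n) (φ : ℝ → M n)
    (hφ0 : φ 0 = x) (hφ : ∀ s : ℝ, HasDerivAt φ (X v (φ s)) s) :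
    ContDiff ℝ (⊤ : ℕ∞) (fun s : ℝ => ρ u (φ s)) ∧
    (∀ s : ℝ, HasDerivAt (fun s : ℝ => ρ u (φ s)) (ρ ⁅u, v⁆ (φ s) + c u v) s) ∧
    iteratedDeriv 0 (fun s : ℝ => ρ u (φ s)) 0 = ρ u x ∧
    (∀ j : ℕ, 1 ≤ j →
      iteratedDeriv j (fun s : ℝ => ρ u (φ s)) 0 = ρ (b j) x + c (b (j - 1)) v) := by
  have hderiv : ∀ (w : 𝔤) (s : ℝ),
      HasDerivAt (fun s : ℝ => ρ w (φ s)) (ρ ⁅w, v⁆ (φ s) + c w v) s := by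
    intro w s
    rw [← hc w v (φ s)]
    exact (((hρ w).differentiable (by simp)) (φ s)).hasFDerivAt.comp_hasDerivAt s (hφ s)
  have hseq : ∀ (j : ℕ) (s : ℝ),
      HasDerivAt (fun s : ℝ => ρ (b j) (φ s)) (ρ (b (j + 1)) (φ s) + c (b j) v) s := by
    intro j s
    rw [hbs j]
    exact hderiv (b j) s
  subst hb0 hφ0
  refine ⟨contDiff_of_hasDerivAt_add_const (f := fun j s => ρ (b j) (φ s)) hseq,
    hderiv (b 0), by rw [iteratedDeriv_zero], fun j hj => ?_⟩
  obtain ⟨k, rfl⟩ := Nat.exists_eq_add_of_le' hj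
  exact congrFun (iteratedDeriv_succ_of_hasDerivAt_add_const
    (f := fun j s => ρ (b j) (φ s)) hseq k) 0
end
end

section
/- In the setting of a weakly Hamiltonian action with Casimir-valued cocycle, the flow evaluation ζ(s) := ρ u (φ s) is real analytic on all of ℝ, and for every s ∈ ℝ the power series expansion at zero converges to it: ζ(s) = ∑_{j=0}^∞ a_j s^j / j! (as a convergent sum), where a_0 := ρ u x and a_j := ρ (b j) x + c (b (j−1)) v for j ≥ 1. -/
/-!
STATEMENT 10: Weakly Hamiltonian action setting.  The flow evaluation
ζ(s) := ρ u (φ s) is real analytic on all of ℝ, and for every s ∈ ℝ its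
power series expansion at zero converges to it:
ζ(s) = ∑_{j=0}^∞ a_j s^j / j!, where a_0 := ρ u x and
a_j := ρ (b j) x + c (b (j−1)) v for j ≥ 1.
-/

noncomputable section

/-- A solution of the linear equation `Y' = B Y` is given by the exponential of `B`. -/
theorem eq_exp_smul_apply_of_hasDerivAt {F : Type*} [NormedAddCommGroup F] [NormedSpace ℝ F]
    [CompleteSpace F] (B : F →L[ℝ] F) (Y : ℝ → F) (hY : ∀ s, HasDerivAt Y (B (Y s)) s) (s : ℝ) :
    Y s = NormedSpace.exp (s • B) (Y 0) := by
  have hderiv : ∀ t : ℝ,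
      HasDerivAt (fun r : ℝ => NormedSpace.exp (r • (-B)) (Y r)) 0 t := by
    intro t
    have h := (hasDerivAt_exp_smul_const (𝕂 := ℝ) (-B) t).clm_apply (hY t)
    convert h using 1
    simp
  have hconst : NormedSpace.exp (s • (-B)) (Y s) = Y 0 := by
    have h := is_const_of_deriv_eq_zero (fun t => (hderiv t).differentiableAt)
      (fun t => (hderiv t).deriv) s 0
    simpa using h
  have hinv : NormedSpace.exp (s • B) * NormedSpace.exp (s • (-B)) = 1 := by
    rw [← NormedSpace.exp_add_of_commute_of_mem_ball (𝕂 := ℝ)]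
    · simp
    · exact ((Commute.refl B).neg_right.smul_left s).smul_right s
    · simp [NormedSpace.expSeries_radius_eq_top]
    · simp [NormedSpace.expSeries_radius_eq_top]
  rw [← hconst, ← mul_apply_eq_comp, hinv, one_apply_eq_self]

/-- A curve of linear functionals on a finite-dimensional space solving `L' = L ∘ A` is pointwise
real analytic, and its Taylor series at zero converges to it everywhere. -/
theorem analyticAt_and_hasSum_of_hasDerivAt_dual {E : Type*} [AddCommGroup E] [Module ℝ E]
    [FiniteDimensional ℝ E] (A : E →ₗ[ℝ] E) (L : ℝ → E →ₗ[ℝ] ℝ)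
    (hL : ∀ e s, HasDerivAt (fun r => L r e) (L s (A e)) s) (e : E) (s : ℝ) :
    AnalyticAt ℝ (fun r => L r e) s ∧
      HasSum (fun j : ℕ => L 0 ((A ^ j) e) * s ^ j / (Nat.factorial j : ℝ)) (L s e) := by
  let β := Module.finBasis ℝ E
  let T := β.constr ℝ (M' := ℝ)
  let B : (Fin (Module.finrank ℝ E) → ℝ) →L[ℝ] (Fin (Module.finrank ℝ E) → ℝ) :=
    LinearMap.toContinuousLinearMap (T.symm.toLinearMap ∘ₗ A.dualMap ∘ₗ T.toLinearMap)
  let ℓ : (Fin (Module.finrank ℝ E) → ℝ) →L[ℝ] ℝ :=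
    LinearMap.toContinuousLinearMap (LinearMap.applyₗ e ∘ₗ T.toLinearMap)
  let Y : ℝ → Fin (Module.finrank ℝ E) → ℝ := fun r => T.symm (L r)
  have hTsymm : ∀ (f : E →ₗ[ℝ] ℝ) i, T.symm f i = f (β i) := fun f i => rfl
  have hB : ∀ f : E →ₗ[ℝ] ℝ, B (T.symm f) = T.symm (f ∘ₗ A) := by
    intro f
    simp [B, LinearMap.dualMap_apply']
  have hY : ∀ r, HasDerivAt Y (B (Y r)) r := by
    intro r
    rw [hB]
    exact hasDerivAt_pi.2 fun i => hL (β i) r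
  have hexp := eq_exp_smul_apply_of_hasDerivAt B Y hY
  have hℓ : ∀ f : E →ₗ[ℝ] ℝ, ℓ (T.symm f) = f e := by
    intro f
    simp [ℓ]
  have hLexp : ∀ r, L r e = ℓ (NormedSpace.exp (r • B) (Y 0)) := fun r => by
    rw [← hexp r, hℓ]
  have hpow : ∀ j : ℕ, (B ^ j) (Y 0) = T.symm (L 0 ∘ₗ A ^ j) := by
    intro j
    induction j with
    | zero => rfl
    | succ j ih =>
      rw [pow_succ', mul_apply_eq_comp, ih, hB, LinearMap.comp_assoc, pow_succ]
      rfl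
  let ψ : ((Fin (Module.finrank ℝ E) → ℝ) →L[ℝ] (Fin (Module.finrank ℝ E) → ℝ)) →L[ℝ] ℝ :=
    ℓ ∘L ContinuousLinearMap.apply ℝ _ (Y 0)
  constructor
  · have h : AnalyticAt ℝ (fun r : ℝ => ψ (NormedSpace.exp (r • B))) s := by
      refine (ψ.analyticAt _).comp (AnalyticAt.comp (g := NormedSpace.exp)
        (f := fun r : ℝ => r • B) (NormedSpace.exp_analytic _) ?_)
      exact analyticAt_id.smul analyticAt_const
    exact h.congr (Filter.Eventually.of_forall fun r => (hLexp r).symm)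
  · have h := (NormedSpace.exp_series_hasSum_exp' (𝕂 := ℝ) (s • B)).mapL ψ
    have hψ : ψ (NormedSpace.exp (s • B)) = L s e := (hLexp s).symm
    rw [hψ] at h
    convert h using 2 with j
    have hj : ψ (B ^ j) = L 0 ((A ^ j) e) := by
      change ℓ ((B ^ j) (Y 0)) = _
      rw [hpow, hℓ]
      rfl
    rw [smul_pow, map_smul, map_smul, hj, smul_eq_mul, smul_eq_mul]
    ring

theorem flow_evaluation_analytic_with_expansion
    {n : ℕ} (hn : 1 ≤ n)
    {𝔤 : Type*} [LieRing 𝔤] [LieAlgebra ℝ 𝔤] [FiniteDimensional ℝ 𝔤]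
    (ρ : 𝔤 →ₗ[ℝ] (M n → ℝ))
    (hρ : ∀ u : 𝔤, ContDiff ℝ (⊤ : ℕ∞) (ρ u))
    -- X u is the Hamiltonian vector field of ρ u
    (X : 𝔤 → M n → M n)
    (hX : ∀ (u : 𝔤) (x w : M n), ω₀ (X u x) w = fderiv ℝ (ρ u) x w)
    -- c is a bilinear map with {ρ u, ρ v}(x) = ρ ⁅u,v⁆ x + c u v
    (c : 𝔤 →ₗ[ℝ] 𝔤 →ₗ[ℝ] ℝ)
    (hc : ∀ (u v : 𝔤) (x : M n), fderiv ℝ (ρ u) x (X v x) = ρ ⁅u, v⁆ x + c u v)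
    -- fixed u, v and the iterated brackets b
    (u v : 𝔤) (b : ℕ → 𝔤) (hb0 : b 0 = u) (hbs : ∀ j : ℕ, b (j + 1) = ⁅b j, v⁆)
    -- φ is an integral curve of X v through x
    (x : M n) (φ : ℝ → M n)
    (hφ0 : φ 0 = x) (hφ : ∀ s : ℝ, HasDerivAt φ (X v (φ s)) s)
    -- the coefficients of the expansion
    (a : ℕ → ℝ) (ha0 : a 0 = ρ u x)
    (haj : ∀ j : ℕ, 1 ≤ j → a j = ρ (b j) x + c (b (j - 1)) v) :
    (∀ s : ℝ, AnalyticAt ℝ (fun s : ℝ => ρ u (φ s)) s) ∧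
    (∀ s : ℝ, HasSum (fun j : ℕ => a j * s ^ j / (Nat.factorial j : ℝ))
      (ρ u (φ s))) := by
  let A : 𝔤 × ℝ →ₗ[ℝ] 𝔤 × ℝ :=
    (LinearMap.prod (-(LieAlgebra.ad ℝ 𝔤 v)) (c.flip v)) ∘ₗ LinearMap.fst ℝ 𝔤 ℝ
  let L : ℝ → 𝔤 × ℝ →ₗ[ℝ] ℝ := fun s =>
    LinearMap.coprod (LinearMap.proj (φ s) ∘ₗ ρ) LinearMap.id
  have hA : ∀ w t, A (w, t) = (⁅w, v⁆, c w v) := fun w t => by simp [A]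
  have hLapply : ∀ s w t, L s (w, t) = ρ w (φ s) + t := fun s w t => by simp [L]
  have hL : ∀ e s, HasDerivAt (fun r => L r e) (L s (A e)) s := by
    rintro ⟨w, t⟩ s
    simp only [hA, hLapply, ← hc]
    exact ((((hρ w).differentiable (by simp)) (φ s)).hasFDerivAt.comp_hasDerivAt s
      (hφ s)).add_const t
  have hpow : ∀ j : ℕ, (A ^ (j + 1)) (u, 0) = (b (j + 1), c (b j) v) := by
    intro j
    induction j with
    | zero => simp [hA, hbs, hb0]
    | succ j ih => rw [pow_succ', Module.End.mul_apply, ih, hA, ← hbs]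
  have hcoeff : ∀ j : ℕ, L 0 ((A ^ j) (u, 0)) = a j := by
    rintro (_ | j)
    · simp [hLapply, hφ0, ha0]
    · simp [hpow, hLapply, hφ0, haj]
  have key := analyticAt_and_hasSum_of_hasDerivAt_dual A L hL (u, 0)
  simp only [hcoeff, hLapply, add_zero] at key
  exact ⟨fun s => (key s).1, fun s => (key s).2⟩
end
end

section
/- In the abelian weakly Hamiltonian setting with nondegenerate constant cocycle c on V and global flows φ_v: for every y ∈ M there exists a unique v ∈ V such that ρ u (φ_v 1 y) = 0 for all u ∈ V. In particular the set N := {x ∈ M | ρ u x = 0 for all u ∈ V} is nonempty. -/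
/-!
STATEMENT 12: Abelian weakly Hamiltonian setting with nondegenerate constant
cocycle c on V and global flows φ v: for every y ∈ M there is a unique v ∈ V
such that ρ u (φ v 1 y) = 0 for all u ∈ V.  In particular
N := {x ∈ M | ρ u x = 0 for all u ∈ V} is nonempty.
-/

noncomputable section

/-- A function whose derivative along a vector field `Y` is the constant `a` grows by `a * t` in
time `t` along the integral curves of `Y`. -/
lemma apply_integralCurve_eq_add {E : Type*} [NormedAddCommGroup E] [NormedSpace ℝ E]
    {F : E → ℝ} (hF : Differentiable ℝ F) {Y : E → E} {a : ℝ} (ha : ∀ x, fderiv ℝ F x (Y x) = a)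
    {γ : ℝ → E} (hγ : ∀ s, HasDerivAt γ (Y (γ s)) s) (t : ℝ) :
    F (γ t) = F (γ 0) + a * t := by
  have hderiv : ∀ s, HasDerivAt (fun r => F (γ r) - a * r) 0 s := fun s => by
    have hcomp : HasDerivAt (fun r => F (γ r)) (fderiv ℝ F (γ s) (Y (γ s))) s :=
      (hF (γ s)).hasFDerivAt.comp_hasDerivAt s (hγ s)
    rw [ha] at hcomp
    exact (hcomp.sub ((hasDerivAt_id s).const_mul a)).congr_deriv (by simp)
  have hconst := is_const_of_deriv_eq_zero (fun s => (hderiv s).differentiableAt)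
    (fun s => (hderiv s).deriv) t 0
  simp only [mul_zero, sub_zero] at hconst
  linarith

/-- A bilinear form on a finite-dimensional space with trivial left kernel represents every linear
functional by a unique vector. -/
lemma bijective_of_nondegenerate {K V : Type*} [Field K] [AddCommGroup V] [Module K V]
    [FiniteDimensional K V] (c : V →ₗ[K] V →ₗ[K] K)
    (hc : ∀ u : V, u ≠ 0 → ∃ v : V, c u v ≠ 0) : Function.Bijective c := by
  have hinj : Function.Injective c := (injective_iff_map_eq_zero c).2 fun u hu => by
    by_contra hne
    obtain ⟨v, hv⟩ := hc u hne
    exact hv (by simp [hu])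
  exact ⟨hinj, (LinearMap.injective_iff_surjective_of_finrank_eq_finrank
    (Subspace.dual_finrank_eq (K := K) (V := V)).symm).1 hinj⟩

theorem unique_translation_into_zero_level
    {n : ℕ} (hn : 1 ≤ n)
    {V : Type*} [AddCommGroup V] [Module ℝ V] [FiniteDimensional ℝ V]
    (ρ : V →ₗ[ℝ] (M n → ℝ))
    (hρ : ∀ u : V, ContDiff ℝ (⊤ : ℕ∞) (ρ u))
    -- X u is the Hamiltonian vector field of ρ u
    (X : V → M n → M n)
    (hX : ∀ (u : V) (x w : M n), ω₀ (X u x) w = fderiv ℝ (ρ u) x w)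
    -- c is an alternating bilinear form with {ρ u, ρ v}(x) = c u v
    (c : V →ₗ[ℝ] V →ₗ[ℝ] ℝ)
    (h_alt : ∀ u : V, c u u = 0)
    (hbr : ∀ (u v : V) (x : M n), fderiv ℝ (ρ u) x (X v x) = c u v)
    -- c is nondegenerate
    (h_nondeg : ∀ u : V, u ≠ 0 → ∃ v : V, c u v ≠ 0)
    -- φ v is a global flow of X v
    (φ : V → ℝ → M n → M n)
    (hφ0 : ∀ (v : V) (y : M n), φ v 0 y = y)
    (hφ : ∀ (v : V) (y : M n) (s : ℝ),
      HasDerivAt (fun t => φ v t y) (X v (φ v s y)) s) :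
    (∀ y : M n, ∃! v : V, ∀ u : V, ρ u (φ v 1 y) = 0) ∧
    (∃ x : M n, ∀ u : V, ρ u x = 0) := by
  have htime_one (u v : V) (y : M n) : ρ u (φ v 1 y) = ρ u y - c v u := by
    have h := apply_integralCurve_eq_add ((hρ u).differentiable (by simp)) (hbr u v) (hφ v y) 1
    rw [hφ0, mul_one] at h
    rw [h, ← LinearMap.IsAlt.neg h_alt v u, sub_eq_add_neg]
  have hexists (y : M n) : ∃! v : V, ∀ u : V, ρ u (φ v 1 y) = 0 := by
    have h := (bijective_of_nondegenerate c h_nondeg).existsUnique (LinearMap.proj y ∘ₗ ρ)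
    simp only [LinearMap.ext_iff, LinearMap.comp_apply, LinearMap.proj_apply] at h
    simpa only [htime_one, sub_eq_zero, @eq_comm ℝ (ρ _ y)] using h
  obtain ⟨v, hv, -⟩ := hexists 0
  exact ⟨hexists, φ v 1 0, hv⟩
end
end

section
/- In the abelian weakly Hamiltonian setting with nondegenerate constant cocycle c on V and global flows φ_v, let N := {x ∈ M | ρ u x = 0 for all u ∈ V}. Then the map Ψ : V × N → M defined by Ψ(v, x) := φ_v 1 x is a bijection. (This is the set-level content of the splitting M ≅ V × N.) -/
/-!
STATEMENT 13: Abelian weakly Hamiltonian setting with nondegenerate constant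
cocycle c on V and global flows φ v.  With N := {x ∈ M | ρ u x = 0 ∀ u ∈ V},
the map Ψ : V × N → M, Ψ(v, x) := φ v 1 x, is a bijection (the set-level
content of the splitting M ≅ V × N).
-/

noncomputable section

/-- Integral curves, defined on all of `ℝ`, of a `C¹` vector field on a Banach space coincide if
they meet at a common time. -/
theorem eq_of_hasDerivAt_of_contDiff_s13 {E : Type*} [NormedAddCommGroup E] [NormedSpace ℝ E]
    [CompleteSpace E] {Y : E → E} (hY : ContDiff ℝ 1 Y) {γ γ' : ℝ → E}
    (hγ : ∀ t, HasDerivAt γ (Y (γ t)) t) (hγ' : ∀ t, HasDerivAt γ' (Y (γ' t)) t)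
    {t₀ : ℝ} (h : γ t₀ = γ' t₀) : γ = γ' :=
  isMIntegralCurve_Ioo_eq_of_contMDiff_boundaryless (I := modelWithCornersSelf ℝ E) (v := Y)
    (contMDiff_vectorSpace_iff_contDiff.2 hY) (fun t => (hγ t).hasFDerivAt.hasMFDerivAt)
    (fun t => (hγ' t).hasFDerivAt.hasMFDerivAt) h

/-- The Hamiltonian vector field of a smooth function is `C¹`. -/
theorem contDiff_hamiltonian_vectorField {n : ℕ} {F : M n → ℝ}
    (hF : ContDiff ℝ (⊤ : ℕ∞) F) {Y : M n → M n}
    (hY : ∀ x w, ω₀ (Y x) w = fderiv ℝ F x w) : ContDiff ℝ 1 Y := by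
  have hdF : ContDiff ℝ 1 (fderiv ℝ F) :=
    (contDiff_infty_iff_fderiv.1 hF).2.of_le (by exact_mod_cast le_top)
  have h₁ : ∀ i, (fun x => (Y x).1 i) = fun x => fderiv ℝ F x (0, Pi.single i 1) := fun i => by
    funext x
    simp [← hY, ω₀, Pi.single_apply]
  have h₂ : ∀ i, (fun x => (Y x).2 i) = fun x => -fderiv ℝ F x (Pi.single i 1, 0) := fun i => by
    funext x
    simp [← hY, ω₀, Pi.single_apply]
  refine ContDiff.prodMk (contDiff_pi.2 fun i => ?_) (contDiff_pi.2 fun i => ?_)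
  · rw [h₁]
    exact hdF.clm_apply contDiff_const
  · rw [h₂]
    exact (hdF.clm_apply contDiff_const).neg

/-- A function with constant derivative `a` along a vector field grows at rate `a` along the
integral curves of the field. -/
theorem apply_integralCurve_eq {E : Type*} [NormedAddCommGroup E] [NormedSpace ℝ E]
    {F : E → ℝ} (hF : Differentiable ℝ F) {Y : E → E} {a : ℝ}
    (ha : ∀ x, fderiv ℝ F x (Y x) = a) {γ : ℝ → E} (hγ : ∀ t, HasDerivAt γ (Y (γ t)) t) (s : ℝ) :
    F (γ s) = F (γ 0) + s * a := by
  have hd : ∀ t, HasDerivAt (fun t => F (γ t) - t * a) 0 t := fun t => by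
    have h₁ := (hF (γ t)).hasFDerivAt.comp_hasDerivAt t (hγ t)
    rw [ha] at h₁
    exact (h₁.sub ((hasDerivAt_id t).mul_const a)).congr_deriv (by simp)
  have := is_const_of_deriv_eq_zero (fun t => (hd t).differentiableAt) (fun t => (hd t).deriv) s 0
  simp only [zero_mul, sub_zero] at this
  linarith

/-- For a nondegenerate alternating bilinear form `c` on a finite-dimensional space,
`v ↦ c · v` is a bijection onto the dual. -/
theorem bijective_flip_of_alternating {V : Type*} [AddCommGroup V] [Module ℝ V]
    [FiniteDimensional ℝ V] (c : V →ₗ[ℝ] V →ₗ[ℝ] ℝ) (h_alt : ∀ u, c u u = 0)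
    (h_nondeg : ∀ u : V, u ≠ 0 → ∃ v : V, c u v ≠ 0) :
    Function.Bijective (c.flip : V →ₗ[ℝ] Module.Dual ℝ V) := by
  have hinj : Function.Injective (c.flip : V →ₗ[ℝ] Module.Dual ℝ V) := by
    refine (injective_iff_map_eq_zero _).2 fun v hv => ?_
    by_contra hne
    obtain ⟨w, hw⟩ := h_nondeg v hne
    have hwv : c w v = 0 := LinearMap.congr_fun hv w
    exact hw (by rw [← LinearMap.IsAlt.neg h_alt, hwv, neg_zero])
  exact ⟨hinj, (LinearMap.injective_iff_surjective_of_finrank_eq_finrank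
    Subspace.dual_finrank_eq.symm).1 hinj⟩

theorem splitting_bijection
    {n : ℕ} (hn : 1 ≤ n)
    {V : Type*} [AddCommGroup V] [Module ℝ V] [FiniteDimensional ℝ V]
    (ρ : V →ₗ[ℝ] (M n → ℝ))
    (hρ : ∀ u : V, ContDiff ℝ (⊤ : ℕ∞) (ρ u))
    -- X u is the Hamiltonian vector field of ρ u
    (X : V → M n → M n)
    (hX : ∀ (u : V) (x w : M n), ω₀ (X u x) w = fderiv ℝ (ρ u) x w)
    -- c is an alternating bilinear form with {ρ u, ρ v}(x) = c u v
    (c : V →ₗ[ℝ] V →ₗ[ℝ] ℝ)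
    (h_alt : ∀ u : V, c u u = 0)
    (hbr : ∀ (u v : V) (x : M n), fderiv ℝ (ρ u) x (X v x) = c u v)
    -- c is nondegenerate
    (h_nondeg : ∀ u : V, u ≠ 0 → ∃ v : V, c u v ≠ 0)
    -- φ v is a global flow of X v
    (φ : V → ℝ → M n → M n)
    (hφ0 : ∀ (v : V) (y : M n), φ v 0 y = y)
    (hφ : ∀ (v : V) (y : M n) (s : ℝ),
      HasDerivAt (fun t => φ v t y) (X v (φ v s y)) s) :
    Function.Bijective
      (fun p : V × {x : M n // ∀ u : V, ρ u x = 0} => φ p.1 1 (p.2 : M n)) := by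
  have hρφ : ∀ u v s y, ρ u (φ v s y) = ρ u y + s * c u v := fun u v s y => by
    simpa [hφ0] using apply_integralCurve_eq ((hρ u).differentiable (by simp)) (hbr u v)
      (hφ v y) s
  have huniq : ∀ v {γ γ' : ℝ → M n}, (∀ t, HasDerivAt γ (X v (γ t)) t) →
      (∀ t, HasDerivAt γ' (X v (γ' t)) t) → ∀ {t₀ : ℝ}, γ t₀ = γ' t₀ → γ = γ' :=
    fun v _ _ h h' _ => eq_of_hasDerivAt_of_contDiff_s13
      (contDiff_hamiltonian_vectorField (hρ v) (hX v)) h h'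
  have hflip := bijective_flip_of_alternating c h_alt h_nondeg
  constructor
  · rintro ⟨v, x, hx⟩ ⟨v', x', hx'⟩ (h : φ v 1 x = φ v' 1 x')
    obtain rfl : v = v' := hflip.1 <| LinearMap.ext fun u => by
      simpa [hρφ, hx, hx'] using congrArg (ρ u) h
    obtain rfl : x = x' := by
      simpa [hφ0] using congrFun (huniq v (hφ v x) (hφ v x') h) 0
    rfl
  · intro z
    obtain ⟨v, hv⟩ := hflip.2 ((LinearMap.proj z).comp ρ)
    have hcv : ∀ u, c u v = ρ u z := LinearMap.congr_fun hv
    refine ⟨(v, ⟨φ v (-1) z, fun u => by rw [hρφ, hcv]; ring⟩), ?_⟩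
    have hshift : ∀ t, HasDerivAt (fun t => φ v (t - 1) z) (X v (φ v (t - 1) z)) t :=
      fun t => (hφ v z (t - 1)).comp_sub_const t 1
    simpa [hφ0] using congrFun (huniq v (hφ v (φ v (-1) z)) hshift (t₀ := 0) (by simp [hφ0])) 1
end
end

section
/- In the abelian weakly Hamiltonian setting with nondegenerate constant cocycle c on V: for every x ∈ M, the linear map from M to the dual space of V sending w to the functional u ↦ fderiv ℝ (ρ u) x (w) is surjective. (Hence 0 is a regular value of the map x ↦ (ρ u x)_{u ∈ V}, and N = {x | ρ u x = 0 ∀ u ∈ V} is a submanifold transverse to the Hamiltonian orbits.) -/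
/-!
STATEMENT 14: Abelian weakly Hamiltonian setting with nondegenerate constant
cocycle c on V: for every x ∈ M, the map sending w ∈ M to the linear functional
u ↦ fderiv ℝ (ρ u) x (w) on V is surjective onto the dual of V.  (Hence 0 is a
regular value of x ↦ (ρ u x)_{u ∈ V}.)
-/

noncomputable section

theorem differentials_surject_onto_dual
    {n : ℕ} (hn : 1 ≤ n)
    {V : Type*} [AddCommGroup V] [Module ℝ V] [FiniteDimensional ℝ V]
    (ρ : V →ₗ[ℝ] (M n → ℝ))
    (hρ : ∀ u : V, ContDiff ℝ (⊤ : ℕ∞) (ρ u))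
    -- X u is the Hamiltonian vector field of ρ u
    (X : V → M n → M n)
    (hX : ∀ (u : V) (x w : M n), ω₀ (X u x) w = fderiv ℝ (ρ u) x w)
    -- c is an alternating bilinear form with {ρ u, ρ v}(x) = c u v
    (c : V →ₗ[ℝ] V →ₗ[ℝ] ℝ)
    (h_alt : ∀ u : V, c u u = 0)
    (hbr : ∀ (u v : V) (x : M n), fderiv ℝ (ρ u) x (X v x) = c u v)
    -- c is nondegenerate
    (h_nondeg : ∀ u : V, u ≠ 0 → ∃ v : V, c u v ≠ 0) :
    ∀ x : M n, ∀ ℓ : V →ₗ[ℝ] ℝ, ∃ w : M n, ∀ u : V, fderiv ℝ (ρ u) x w = ℓ u := by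
  intro x ℓ
  have hinj : Function.Injective c := by
    refine (injective_iff_map_eq_zero c).2 fun u hu => ?_
    by_contra hne
    obtain ⟨v, hv⟩ := h_nondeg u hne
    exact hv (by simp [hu])
  have hdim : Module.finrank ℝ V = Module.finrank ℝ (V →ₗ[ℝ] ℝ) :=
    (Subspace.dual_finrank_eq (K := ℝ) (V := V)).symm
  obtain ⟨v, rfl⟩ := (LinearMap.injective_iff_surjective_of_finrank_eq_finrank hdim).1 hinj ℓ
  refine ⟨X (-v) x, fun u => ?_⟩
  rw [hbr, map_neg]
  exact LinearMap.IsAlt.neg h_alt u v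
end
end

section
/- In the abelian weakly Hamiltonian setting with nondegenerate constant cocycle c on V: for every x ∈ M, (i) ω₀(X_{ρ u} x, X_{ρ v} x) = c u v for all u, v ∈ V; (ii) the linear map V → M, u ↦ X_{ρ u} x, is injective, and ω₀ restricts to a nondegenerate form on its range W_x; (iii) M is the direct sum of W_x and K_x := {w ∈ M | fderiv ℝ (ρ u) x w = 0 for all u ∈ V}; (iv) ω₀ restricted to K_x is nondegenerate. (This is the pointwise symplectic splitting underlying the fact that N is a symplectic/Poisson-Dirac submanifold and the leaves L_x are symplectic.) -/
/-!
STATEMENT 15: Abelian weakly Hamiltonian setting with nondegenerate constant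
cocycle c on V: for every x ∈ M,
(i)   ω₀(X u x, X v x) = c u v for all u, v ∈ V;
(ii)  u ↦ X u x is injective and ω₀ restricts nondegenerately to its range W_x;
(iii) M = W_x ⊕ K_x, where K_x = {w | fderiv ℝ (ρ u) x w = 0 ∀ u};
(iv)  ω₀ restricted to K_x is nondegenerate.
-/

noncomputable section

theorem ω₀_add_right {n : ℕ} (x y z : M n) : ω₀ x (y + z) = ω₀ x y + ω₀ x z := by
  simp only [ω₀, Prod.fst_add, Prod.snd_add, Pi.add_apply, mul_add, Finset.sum_add_distrib]
  ring

theorem ω₀_swap {n : ℕ} (x y : M n) : ω₀ x y = -ω₀ y x := by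
  simp only [ω₀, mul_comm, neg_sub]

theorem eq_zero_of_ω₀_eq_zero {n : ℕ} {x : M n} (h : ∀ y, ω₀ x y = 0) : x = 0 := by
  ext i
  · simpa [ω₀, Pi.single_apply] using h (0, Pi.single i 1)
  · simpa [ω₀, Pi.single_apply] using h (Pi.single i 1, 0)

/-- A nondegenerate alternating form on a finite-dimensional space represents every functional
in its second argument. -/
theorem exists_forall_apply_eq_of_alternating {V : Type*} [AddCommGroup V] [Module ℝ V]
    [FiniteDimensional ℝ V] {c : V →ₗ[ℝ] V →ₗ[ℝ] ℝ} (h_alt : c.IsAlt)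
    (hc : Function.Injective c) (f : V →ₗ[ℝ] ℝ) : ∃ v, ∀ u, c u v = f u := by
  have hsurj : Function.Surjective c :=
    (LinearMap.injective_iff_surjective_of_finrank_eq_finrank
      (Subspace.dual_finrank_eq (K := ℝ) (V := V)).symm).1 hc
  obtain ⟨v, hv⟩ := hsurj (-f)
  refine ⟨v, fun u => ?_⟩
  rw [← h_alt.neg, hv, LinearMap.neg_apply, neg_neg]

/-- For a linear family of differentiable functions, the derivatives at `x` in the direction `m`
depend linearly on the parameter. -/
def fderivFunctional {V E : Type*} [AddCommGroup V] [Module ℝ V] [NormedAddCommGroup E]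
    [NormedSpace ℝ E] (ρ : V →ₗ[ℝ] (E → ℝ)) (x m : E)
    (hρ : ∀ u, DifferentiableAt ℝ (ρ u) x) : V →ₗ[ℝ] ℝ where
  toFun u := fderiv ℝ (ρ u) x m
  map_add' u v := by rw [map_add, fderiv_add (hρ u) (hρ v), add_apply]
  map_smul' a u := by
    rw [map_smul, fderiv_const_smul (hρ u), smul_apply, RingHom.id_apply]

theorem pointwise_symplectic_splitting
    {n : ℕ} (hn : 1 ≤ n)
    {V : Type*} [AddCommGroup V] [Module ℝ V] [FiniteDimensional ℝ V]
    (ρ : V →ₗ[ℝ] (M n → ℝ))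
    (hρ : ∀ u : V, ContDiff ℝ (⊤ : ℕ∞) (ρ u))
    -- X u is the Hamiltonian vector field of ρ u
    (X : V → M n → M n)
    (hX : ∀ (u : V) (x w : M n), ω₀ (X u x) w = fderiv ℝ (ρ u) x w)
    -- c is an alternating bilinear form with {ρ u, ρ v}(x) = c u v
    (c : V →ₗ[ℝ] V →ₗ[ℝ] ℝ)
    (h_alt : ∀ u : V, c u u = 0)
    (hbr : ∀ (u v : V) (x : M n), fderiv ℝ (ρ u) x (X v x) = c u v)
    -- c is nondegenerate
    (h_nondeg : ∀ u : V, u ≠ 0 → ∃ v : V, c u v ≠ 0) :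
    ∀ x : M n,
      -- (i)
      (∀ u v : V, ω₀ (X u x) (X v x) = c u v) ∧
      -- (ii) injectivity and nondegeneracy of ω₀ on W_x := range (u ↦ X u x)
      (Function.Injective (fun u : V => X u x)) ∧
      (∀ w ∈ Set.range (fun u : V => X u x), w ≠ 0 →
        ∃ w' ∈ Set.range (fun u : V => X u x), ω₀ w w' ≠ 0) ∧
      -- (iii) M = W_x ⊕ K_x
      (∀ m : M n, ∃ w ∈ Set.range (fun u : V => X u x),
        ∃ k ∈ {w : M n | ∀ u : V, fderiv ℝ (ρ u) x w = 0}, m = w + k) ∧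
      (∀ m ∈ Set.range (fun u : V => X u x),
        m ∈ {w : M n | ∀ u : V, fderiv ℝ (ρ u) x w = 0} → m = 0) ∧
      -- (iv) ω₀ is nondegenerate on K_x
      (∀ w ∈ {w : M n | ∀ u : V, fderiv ℝ (ρ u) x w = 0}, w ≠ 0 →
        ∃ w' ∈ {w : M n | ∀ u : V, fderiv ℝ (ρ u) x w = 0}, ω₀ w w' ≠ 0) := by
  intro x
  have hω : ∀ u v, ω₀ (X u x) (X v x) = c u v := fun u v => (hX u x _).trans (hbr u v x)
  have hX0 : X 0 x = 0 := eq_zero_of_ω₀_eq_zero fun w => by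
    rw [hX, map_zero, fderiv_zero]
    rfl
  have hc : Function.Injective c := (injective_iff_map_eq_zero c).2 fun u hu => by
    by_contra hne
    obtain ⟨v, hv⟩ := h_nondeg u hne
    exact hv (by rw [hu, LinearMap.zero_apply])
  have hsplit : ∀ m : M n, ∃ w ∈ Set.range (fun u : V => X u x),
      ∃ k ∈ {w : M n | ∀ u : V, fderiv ℝ (ρ u) x w = 0}, m = w + k := fun m => by
    have hdiff : ∀ u, DifferentiableAt ℝ (ρ u) x := fun u =>
      ((hρ u).differentiable (by simp)).differentiableAt
    obtain ⟨v, hv⟩ :=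
      exists_forall_apply_eq_of_alternating h_alt hc (fderivFunctional ρ x m hdiff)
    refine ⟨X v x, ⟨v, rfl⟩, m - X v x, fun u => ?_, (add_sub_cancel _ _).symm⟩
    rw [map_sub, hbr, hv]
    exact sub_self _
  refine ⟨hω, fun u u' h => hc (LinearMap.ext fun v => ?_), ?_, hsplit, ?_, ?_⟩
  · rw [← hω, ← hω]
    exact congrArg (ω₀ · (X v x)) h
  · rintro _ ⟨u, rfl⟩ hne
    obtain ⟨v, hv⟩ := h_nondeg u fun hu => hne (by simpa only [hu] using hX0)
    exact ⟨X v x, ⟨v, rfl⟩, by rwa [hω]⟩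
  · rintro _ ⟨v, rfl⟩ hv
    by_contra hne
    obtain ⟨u, hu⟩ := h_nondeg v fun h => hne (by simpa only [h] using hX0)
    refine hu ?_
    rw [← hω, ω₀_swap, hX, hv u, neg_zero]
  · intro w hw hne
    by_contra! hK
    refine hne (eq_zero_of_ω₀_eq_zero fun m => ?_)
    obtain ⟨_, ⟨v, rfl⟩, k, hk, rfl⟩ := hsplit m
    rw [ω₀_add_right, hK k hk, ω₀_swap, hX, hw v, neg_zero, add_zero]
end
end

section
/- In the setting of a weakly Hamiltonian action with Casimir-valued cocycle, suppose the iterated brackets terminate: b k = 0 for some k (as happens when 𝔤 is nilpotent). If the integral curve φ of X_{ρ v} through x is periodic, i.e. there exists T > 0 with φ(s + T) = φ(s) for all s ∈ ℝ, then ρ (b j) x + c (b (j−1)) v = 0 for every j ≥ 1; in particular x lies in the zero level set of the function y ↦ ρ ⁅u,v⁆ y + c u v. -/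
/-!
STATEMENT 16: Weakly Hamiltonian action setting with terminating iterated
brackets (b k = 0 for some k).  If the integral curve φ of X (ρ v) through x is
periodic with some period T > 0, then ρ (b j) x + c (b (j−1)) v = 0 for every
j ≥ 1; in particular x is in the zero level set of y ↦ ρ ⁅u,v⁆ y + c u v.
-/

noncomputable section

/-- Let `f (j + 1) + d j` be the derivative of `f j`, with every `f j` periodic. If these derivatives
vanish from some index on, then all of them vanish. -/
theorem deriv_chain_eq_zero_of_periodic {f : ℕ → ℝ → ℝ} {d : ℕ → ℝ} {T : ℝ} (hT : 0 < T)
    (hf : ∀ j s, HasDerivAt (f j) (f (j + 1) s + d j) s) (hper : ∀ j, Function.Periodic (f j) T)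
    {k : ℕ} (hk : ∀ j, k ≤ j → ∀ s, f (j + 1) s + d j = 0) (j : ℕ) (s : ℝ) :
    f (j + 1) s + d j = 0 := by
  have main : ∀ m j, k ≤ j + m → ∀ s, f (j + 1) s + d j = 0 := by
    intro m
    induction m with
    | zero => exact hk
    | succ m ih =>
      intro j hj s
      have hconst : ∀ r, f (j + 1) r = f (j + 1) s := fun r =>
        is_const_of_deriv_eq_zero (fun t => (hf (j + 1) t).differentiableAt)
          (fun t => (hf (j + 1) t).deriv.trans (ih (j + 1) (by omega) t)) r s
      obtain ⟨r, -, hr⟩ := exists_hasDerivAt_eq_zero hT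
        (fun t _ => (hf j t).continuousAt.continuousWithinAt) (hper j).eq.symm
        (fun t _ => hf j t)
      rwa [hconst r] at hr
  exact main k j (by omega) s

theorem periodic_orbit_in_level_set
    {n : ℕ} (hn : 1 ≤ n)
    {𝔤 : Type*} [LieRing 𝔤] [LieAlgebra ℝ 𝔤] [FiniteDimensional ℝ 𝔤]
    (ρ : 𝔤 →ₗ[ℝ] (M n → ℝ))
    (hρ : ∀ u : 𝔤, ContDiff ℝ (⊤ : ℕ∞) (ρ u))
    -- X u is the Hamiltonian vector field of ρ u
    (X : 𝔤 → M n → M n)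
    (hX : ∀ (u : 𝔤) (x w : M n), ω₀ (X u x) w = fderiv ℝ (ρ u) x w)
    -- c is a bilinear map with {ρ u, ρ v}(x) = ρ ⁅u,v⁆ x + c u v
    (c : 𝔤 →ₗ[ℝ] 𝔤 →ₗ[ℝ] ℝ)
    (hc : ∀ (u v : 𝔤) (x : M n), fderiv ℝ (ρ u) x (X v x) = ρ ⁅u, v⁆ x + c u v)
    -- fixed u, v and the iterated brackets b, terminating at some step k
    (u v : 𝔤) (b : ℕ → 𝔤) (hb0 : b 0 = u) (hbs : ∀ j : ℕ, b (j + 1) = ⁅b j, v⁆)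
    (k : ℕ) (hbk : b k = 0)
    -- φ is an integral curve of X v through x
    (x : M n) (φ : ℝ → M n)
    (hφ0 : φ 0 = x) (hφ : ∀ s : ℝ, HasDerivAt φ (X v (φ s)) s)
    -- φ is periodic with period T > 0
    (T : ℝ) (hT : 0 < T) (hper : ∀ s : ℝ, φ (s + T) = φ s) :
    (∀ j : ℕ, 1 ≤ j → ρ (b j) x + c (b (j - 1)) v = 0) ∧
    ρ ⁅u, v⁆ x + c u v = 0 := by
  have hbzero : ∀ j, k ≤ j → b j = 0 := fun j hj => by
    induction j, hj using Nat.le_induction with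
    | base => exact hbk
    | succ j _ ih => rw [hbs, ih, zero_lie]
  have hderiv : ∀ j s, HasDerivAt (fun t => ρ (b j) (φ t)) (ρ (b (j + 1)) (φ s) + c (b j) v) s := by
    intro j s
    have hdiff : DifferentiableAt ℝ (ρ (b j)) (φ s) :=
      (hρ (b j)).differentiable (by simp) (φ s)
    rw [hbs, ← hc]
    exact hdiff.hasFDerivAt.comp_hasDerivAt s (hφ s)
  have hvanish : ∀ j, ρ (b (j + 1)) x + c (b j) v = 0 := fun j => by
    have h := deriv_chain_eq_zero_of_periodic (f := fun j t => ρ (b j) (φ t))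
      (d := fun j => c (b j) v) hT hderiv (fun j s => congrArg (ρ (b j)) (hper s)) (k := k)
      (fun j hj s => by simp [hbzero j hj, hbzero (j + 1) (by omega)]) j 0
    simpa only [hφ0] using h
  refine ⟨fun j hj => ?_, ?_⟩
  · obtain ⟨i, rfl⟩ := Nat.exists_eq_add_of_le' hj
    exact hvanish i
  · simpa only [hbs, hb0] using hvanish 0
end
end

section
/- In the setting of a weakly Hamiltonian action with Casimir-valued cocycle, suppose b k = 0 for some k, and suppose that ρ (b j) x + c (b (j−1)) v ≠ 0 for some j ≥ 1. Then for every a ∈ ℝ the set {s ∈ ℝ | ρ u (φ s) = a} is finite; i.e. the orbit of X_{ρ v} through x intersects every level set of ρ u only finitely many times. -/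
/-!
STATEMENT 17: Weakly Hamiltonian action setting with terminating iterated
brackets (b k = 0 for some k).  If ρ (b j) x + c (b (j−1)) v ≠ 0 for some j ≥ 1,
then for every a ∈ ℝ the set {s ∈ ℝ | ρ u (φ s) = a} is finite: the orbit of
X (ρ v) through x meets every level set of ρ u only finitely many times.
-/

noncomputable section

open Polynomial in
theorem exists_polynomial_derivative_eq (Q : ℝ[X]) : ∃ P : ℝ[X], derivative P = Q := by
  induction Q using Polynomial.induction_on' with
  | add p q hp hq =>
    obtain ⟨P, rfl⟩ := hp
    obtain ⟨R, rfl⟩ := hq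
    exact ⟨P + R, derivative_add⟩
  | monomial m r =>
    refine ⟨monomial (m + 1) (r / (m + 1)), ?_⟩
    have hm : (m : ℝ) + 1 ≠ 0 := by positivity
    simp [hm]

/-- A function with a vanishing iterated derivative is a polynomial function; the iterated
derivatives are given as a sequence `g`. -/
theorem exists_polynomial_of_derivSeq_eq_zero (k : ℕ) (g : ℕ → ℝ → ℝ)
    (hg : ∀ j s, HasDerivAt (g j) (g (j + 1) s) s) (hk : ∀ s, g k s = 0) :
    ∃ P : Polynomial ℝ, ∀ s, g 0 s = P.eval s := by
  induction k generalizing g with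
  | zero => exact ⟨0, by simpa using hk⟩
  | succ k ih =>
    obtain ⟨Q, hQ⟩ := ih (fun j => g (j + 1)) (fun j s => hg (j + 1) s) hk
    obtain ⟨P, rfl⟩ := exists_polynomial_derivative_eq Q
    have hd : ∀ s, HasDerivAt (fun t => g 0 t - P.eval t) 0 s := fun s => by
      have h := (hg 0 s).sub (P.hasDerivAt s)
      rwa [hQ s, sub_self] at h
    refine ⟨P + Polynomial.C (g 0 0 - P.eval 0), fun s => ?_⟩
    have h := is_const_of_deriv_eq_zero (fun t => (hd t).differentiableAt)
      (fun t => (hd t).deriv) s 0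
    simp only [Polynomial.eval_add, Polynomial.eval_C]
    linarith

theorem derivSeq_eq_zero (g : ℕ → ℝ → ℝ) (hg : ∀ j s, HasDerivAt (g j) (g (j + 1) s) s)
    (h0 : ∀ s, g 0 s = 0) (j : ℕ) (s : ℝ) : g j s = 0 := by
  induction j generalizing s with
  | zero => exact h0 s
  | succ j ih =>
    have h := hg j s
    rw [funext ih] at h
    exact h.unique (hasDerivAt_const s 0)

theorem finite_zeros_of_derivSeq (k : ℕ) (g : ℕ → ℝ → ℝ)
    (hg : ∀ j s, HasDerivAt (g j) (g (j + 1) s) s) (hk : ∀ s, g k s = 0)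
    (hne : ∃ j s, g j s ≠ 0) : {s | g 0 s = 0}.Finite := by
  obtain ⟨P, hP⟩ := exists_polynomial_of_derivSeq_eq_zero k g hg hk
  have hP0 : P ≠ 0 := by
    rintro rfl
    obtain ⟨j, s, hjs⟩ := hne
    exact hjs (derivSeq_eq_zero g hg (by simpa using hP) j s)
  simpa only [hP, Polynomial.IsRoot.def] using Polynomial.finite_setOfPred_isRoot hP0

theorem orbit_meets_level_sets_finitely
    {n : ℕ} (hn : 1 ≤ n)
    {𝔤 : Type*} [LieRing 𝔤] [LieAlgebra ℝ 𝔤] [FiniteDimensional ℝ 𝔤]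
    (ρ : 𝔤 →ₗ[ℝ] (M n → ℝ))
    (hρ : ∀ u : 𝔤, ContDiff ℝ (⊤ : ℕ∞) (ρ u))
    -- X u is the Hamiltonian vector field of ρ u
    (X : 𝔤 → M n → M n)
    (hX : ∀ (u : 𝔤) (x w : M n), ω₀ (X u x) w = fderiv ℝ (ρ u) x w)
    -- c is a bilinear map with {ρ u, ρ v}(x) = ρ ⁅u,v⁆ x + c u v
    (c : 𝔤 →ₗ[ℝ] 𝔤 →ₗ[ℝ] ℝ)
    (hc : ∀ (u v : 𝔤) (x : M n), fderiv ℝ (ρ u) x (X v x) = ρ ⁅u, v⁆ x + c u v)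
    -- fixed u, v and the iterated brackets b, terminating at some step k
    (u v : 𝔤) (b : ℕ → 𝔤) (hb0 : b 0 = u) (hbs : ∀ j : ℕ, b (j + 1) = ⁅b j, v⁆)
    (k : ℕ) (hbk : b k = 0)
    -- φ is an integral curve of X v through x
    (x : M n) (φ : ℝ → M n)
    (hφ0 : φ 0 = x) (hφ : ∀ s : ℝ, HasDerivAt φ (X v (φ s)) s)
    -- some coefficient of the expansion is nonzero
    (hne : ∃ j : ℕ, 1 ≤ j ∧ ρ (b j) x + c (b (j - 1)) v ≠ 0) :
    ∀ a : ℝ, {s : ℝ | ρ u (φ s) = a}.Finite := by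
  intro a
  have hderiv : ∀ j s, HasDerivAt (fun t => ρ (b j) (φ t)) (ρ (b (j + 1)) (φ s) + c (b j) v) s := by
    intro j s
    rw [hbs, ← hc]
    exact ((hρ (b j)).differentiable (by simp) (φ s)).hasFDerivAt.comp_hasDerivAt s (hφ s)
  let g : ℕ → ℝ → ℝ := fun j s =>
    ρ (b j) (φ s) + Nat.casesOn j (-a) fun i => c (b i) v
  have hg : ∀ j s, HasDerivAt (g j) (g (j + 1) s) s := fun j s => (hderiv j s).add_const _
  have hk : ∀ s, g (k + 1) s = 0 := fun s => by simp [g, hbs, hbk]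
  have hfin := finite_zeros_of_derivSeq (k + 1) g hg hk <| by
    obtain ⟨j, hj, hjne⟩ := hne
    obtain ⟨i, rfl⟩ := Nat.exists_eq_add_of_le' hj
    exact ⟨i + 1, 0, by simpa [g, hφ0] using hjne⟩
  simpa [g, hb0, ← sub_eq_add_neg, sub_eq_zero] using hfin
end
end

section
/- In the setting of a weakly Hamiltonian action with Casimir-valued cocycle, suppose b k = 0 for some k, and suppose that ρ (b j) x + c (b (j−1)) v = 0 for every j ≥ 1. Then the flow evaluation is constant: ρ u (φ s) = ρ u x for all s ∈ ℝ; i.e. the orbit of X_{ρ v} through x is entirely contained in the level set of ρ u through x. -/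
/-!
STATEMENT 18: Weakly Hamiltonian action setting with terminating iterated
brackets (b k = 0 for some k).  If ρ (b j) x + c (b (j−1)) v = 0 for every j ≥ 1,
then the flow evaluation is constant: ρ u (φ s) = ρ u x for all s ∈ ℝ, i.e. the
orbit of X (ρ v) through x is contained in the level set of ρ u through x.
-/

noncomputable section

theorem orbit_contained_in_level_set
    {n : ℕ} (hn : 1 ≤ n)
    {𝔤 : Type*} [LieRing 𝔤] [LieAlgebra ℝ 𝔤] [FiniteDimensional ℝ 𝔤]
    (ρ : 𝔤 →ₗ[ℝ] (M n → ℝ))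
    (hρ : ∀ u : 𝔤, ContDiff ℝ (⊤ : ℕ∞) (ρ u))
    -- X u is the Hamiltonian vector field of ρ u
    (X : 𝔤 → M n → M n)
    (hX : ∀ (u : 𝔤) (x w : M n), ω₀ (X u x) w = fderiv ℝ (ρ u) x w)
    -- c is a bilinear map with {ρ u, ρ v}(x) = ρ ⁅u,v⁆ x + c u v
    (c : 𝔤 →ₗ[ℝ] 𝔤 →ₗ[ℝ] ℝ)
    (hc : ∀ (u v : 𝔤) (x : M n), fderiv ℝ (ρ u) x (X v x) = ρ ⁅u, v⁆ x + c u v)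
    -- fixed u, v and the iterated brackets b, terminating at some step k
    (u v : 𝔤) (b : ℕ → 𝔤) (hb0 : b 0 = u) (hbs : ∀ j : ℕ, b (j + 1) = ⁅b j, v⁆)
    (k : ℕ) (hbk : b k = 0)
    -- φ is an integral curve of X v through x
    (x : M n) (φ : ℝ → M n)
    (hφ0 : φ 0 = x) (hφ : ∀ s : ℝ, HasDerivAt φ (X v (φ s)) s)
    -- all coefficients of the expansion vanish
    (hall : ∀ j : ℕ, 1 ≤ j → ρ (b j) x + c (b (j - 1)) v = 0) :
    ∀ s : ℝ, ρ u (φ s) = ρ u x := by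
  have key : ∀ i j : ℕ, i + j = k → ∀ s : ℝ, ρ (b j) (φ s) = ρ (b j) x := by
    intro i
    induction i with
    | zero =>
      intro j hj s
      obtain rfl : j = k := by omega
      simp [hbk]
    | succ i ih =>
      intro j hj s
      have hderiv : ∀ t : ℝ, HasDerivAt (fun t => ρ (b j) (φ t)) 0 t := by
        intro t
        have hdiff : DifferentiableAt ℝ (ρ (b j)) (φ t) :=
          ((hρ (b j)).differentiable (by simp)).differentiableAt
        have hcomp := hdiff.hasFDerivAt.comp_hasDerivAt t (hφ t)
        rw [hc, ← hbs, ih (j + 1) (by omega) t] at hcomp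
        have hzero : ρ (b (j + 1)) x + c (b j) v = 0 := hall (j + 1) (by omega)
        rwa [hzero] at hcomp
      have hconst := is_const_of_deriv_eq_zero (fun t => (hderiv t).differentiableAt)
        (fun t => (hderiv t).deriv) s 0
      simpa only [hφ0] using hconst
  intro s
  simpa only [hb0] using key k 0 (by omega) s
end
end
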